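/- Let (H,A,C) be a Doi-Hopf datum and z = Σ_i c_i⊗a_i ∈ C⊗A a dual A-integral. Then for every right A-module N, the map θ_N : N → C⊗N, θ_N(n) = Σ_i c_i ⊗ n·a_i, is right A-linear, where C⊗N carries the action (c⊗n)·a = Σ c·a_{<-1>} ⊗ n·a_{<0>}. If moreover z is normalized, then (ε_C⊗I_N)∘θ_N = id_N, i.e. θ_N is a section of the counit map C⊗N → N, c⊗n ↦ ε(c)n. -/

import Mathlib

/-! Writing `sm n : A → N` for `a ↦ n·a`, the map `θ_N` is `n ↦ (id ⊗ sm n) z`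
(`thetaMap_apply`). Associativity of the action says that `sm (n·a)` is `sm n` after left
multiplication by `a`, and that `id ⊗ sm n : C ⊗ A → C ⊗ N` commutes with the right
`A`-actions (`actCN_map`). So applying `id ⊗ sm n` to the integral identity for `z` gives the
`A`-linearity of `θ_N`. The counit map is natural, so it sends `(id ⊗ sm n) z` to
`sm n (Σ ε(c_i) a_i)`, which is `n·1 = n` when `z` is normalized. -/

open TensorProduct

noncomputable section

/-- A Doi-Hopf datum `(H, A, C)`: `H` is a `k`-bialgebra, `A` is a left `H`-comodule
algebra (with coaction `ρ`), and `C` is a right `H`-module coalgebra (with action `act`). -/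
structure DoiHopfDatum (k H A C : Type*) [CommRing k] [Ring H] [Bialgebra k H]
    [Ring A] [Algebra k A] [AddCommGroup C] [Module k C] [Coalgebra k C] where
  /-- the coaction `ρ_A : A → H ⊗ A`, `ρ a = Σ a_{<-1>} ⊗ a_{<0>}` -/
  ρ : A →ₗ[k] H ⊗[k] A
  ρ_coassoc : ∀ a : A,
    (TensorProduct.assoc k H H A)
        ((TensorProduct.map (Coalgebra.comul (R := k)) LinearMap.id) (ρ a))
      = (TensorProduct.map LinearMap.id ρ) (ρ a)
  ρ_counit : ∀ a : A,
    (TensorProduct.lid k A)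
        ((TensorProduct.map (Coalgebra.counit (R := k)) LinearMap.id) (ρ a)) = a
  ρ_mul : ∀ a b : A, ρ (a * b) = ρ a * ρ b
  ρ_one : ρ 1 = 1
  /-- the right `H`-action on `C`, written `act c h = c · h` -/
  act : C →ₗ[k] H →ₗ[k] C
  act_one : ∀ c : C, act c 1 = c
  act_mul : ∀ (c : C) (g h : H), act (act c g) h = act c (g * h)
  comul_act : ∀ (c : C) (h : H),
    Coalgebra.comul (R := k) (act c h)
      = (TensorProduct.map (TensorProduct.lift act) (TensorProduct.lift act))
          ((TensorProduct.tensorTensorTensorComm k C C H H)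
            (Coalgebra.comul (R := k) c ⊗ₜ[k] Coalgebra.comul (R := k) h))
  counit_act : ∀ (c : C) (h : H),
    Coalgebra.counit (R := k) (act c h)
      = Coalgebra.counit (R := k) c * Coalgebra.counit (R := k) h

namespace DoiHopfDatum

variable {k H A C : Type*} [CommRing k] [Ring H] [Bialgebra k H]
    [Ring A] [Algebra k A] [AddCommGroup C] [Module k C] [Coalgebra k C]
variable (D : DoiHopfDatum k H A C)

/-- The action `C ⊗ H → C` as a linear map on the tensor product. -/
def actL : C ⊗[k] H →ₗ[k] C := TensorProduct.lift D.act

/-- The iterated coaction `a ↦ Σ (a_{<-2>} ⊗ a_{<-1>}) ⊗ a_{<0>}`. -/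
def ρ2 : A →ₗ[k] (H ⊗[k] H) ⊗[k] A :=
  (TensorProduct.assoc k H H A).symm.toLinearMap ∘ₗ
    (TensorProduct.map LinearMap.id D.ρ) ∘ₗ D.ρ

/-- The simultaneous action of `H ⊗ H` on `C ⊗ C`. -/
def act2 : (C ⊗[k] C) ⊗[k] (H ⊗[k] H) →ₗ[k] C ⊗[k] C :=
  (TensorProduct.map D.actL D.actL) ∘ₗ
    (TensorProduct.tensorTensorTensorComm k C C H H).toLinearMap

/-- The right `A`-action on `C ⊗ A`: `(c ⊗ b) · a = Σ c·a_{<-1>} ⊗ b·a_{<0>}`. -/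
def rActCA : (C ⊗[k] A) ⊗[k] A →ₗ[k] C ⊗[k] A :=
  (TensorProduct.map D.actL (LinearMap.mul' k A)) ∘ₗ
    (TensorProduct.tensorTensorTensorComm k C A H A).toLinearMap ∘ₗ
    (TensorProduct.map LinearMap.id D.ρ)

/-- The right-hand side of condition (a) of `V₃`:
`(c ⊗ d) ⊗ a ↦ Σ a_{<0>} * θ(c·a_{<-2>} ⊗ d·a_{<-1>})`. -/
def V3aRHS (θ : C ⊗[k] C →ₗ[k] A) : (C ⊗[k] C) ⊗[k] A →ₗ[k] A :=
  (LinearMap.mul' k A) ∘ₗ (TensorProduct.comm k A A).toLinearMap ∘ₗ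
    (TensorProduct.map θ LinearMap.id) ∘ₗ
    (TensorProduct.map D.act2 LinearMap.id) ∘ₗ
    (TensorProduct.assoc k (C ⊗[k] C) (H ⊗[k] H) A).symm.toLinearMap ∘ₗ
    (TensorProduct.map LinearMap.id D.ρ2)

/-- The left-hand side of condition (b) of `V₃`: `c ⊗ d ↦ Σ c_(1) ⊗ θ(c_(2) ⊗ d)`. -/
def V3bLHS (_D : DoiHopfDatum k H A C) (θ : C ⊗[k] C →ₗ[k] A) : C ⊗[k] C →ₗ[k] C ⊗[k] A :=
  (TensorProduct.map LinearMap.id θ) ∘ₗ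
    (TensorProduct.assoc k C C C).toLinearMap ∘ₗ
    (TensorProduct.map (Coalgebra.comul (R := k)) LinearMap.id)

/-- The right-hand side of condition (b) of `V₃`:
`c ⊗ d ↦ Σ d_(2)·θ(c ⊗ d_(1))_{<-1>} ⊗ θ(c ⊗ d_(1))_{<0>}`. -/
def V3bRHS (θ : C ⊗[k] C →ₗ[k] A) : C ⊗[k] C →ₗ[k] C ⊗[k] A :=
  (TensorProduct.map D.actL LinearMap.id) ∘ₗ
    (TensorProduct.assoc k C H A).symm.toLinearMap ∘ₗ
    (TensorProduct.comm k (H ⊗[k] A) C).toLinearMap ∘ₗ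
    (TensorProduct.map D.ρ LinearMap.id) ∘ₗ
    (TensorProduct.map θ LinearMap.id) ∘ₗ
    (TensorProduct.assoc k C C C).symm.toLinearMap ∘ₗ
    (TensorProduct.map LinearMap.id (Coalgebra.comul (R := k)))

/-- `θ : C ⊗ C → A` belongs to `V₃`. -/
def IsV3 (θ : C ⊗[k] C →ₗ[k] A) : Prop :=
  (∀ (c d : C) (a : A), θ (c ⊗ₜ[k] d) * a = D.V3aRHS θ ((c ⊗ₜ[k] d) ⊗ₜ[k] a)) ∧
    D.V3bLHS θ = D.V3bRHS θ

/-- `θ` is normalized: `Σ θ(c_(1) ⊗ c_(2)) = ε(c)1_A`. -/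
def IsNormalizedV3 (_D : DoiHopfDatum k H A C) (θ : C ⊗[k] C →ₗ[k] A) : Prop :=
  ∀ c : C, θ (Coalgebra.comul (R := k) c)
    = algebraMap k A (Coalgebra.counit (R := k) c)

/-- An `A`-integral `γ : C → Hom(C,A)` for the Doi-Hopf datum: its uncurried form
lies in `V₃`. -/
def IsAIntegral (γ : C →ₗ[k] (C →ₗ[k] A)) : Prop :=
  D.IsV3 (TensorProduct.lift γ)

/-- A total `A`-integral: a normalized `A`-integral. -/
def IsTotalAIntegral (γ : C →ₗ[k] (C →ₗ[k] A)) : Prop :=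
  D.IsAIntegral γ ∧ D.IsNormalizedV3 (TensorProduct.lift γ)

end DoiHopfDatum

/-- A right-left Doi-Hopf module over the Doi-Hopf datum `D`: a right `A`-module and
left `C`-comodule `M` satisfying `ρ_M(m·a) = Σ m_{<-1>}·a_{<-1>} ⊗ m_{<0>}·a_{<0>}`. -/
structure DHModule {k H A C : Type*} [CommRing k] [Ring H] [Bialgebra k H]
    [Ring A] [Algebra k A] [AddCommGroup C] [Module k C] [Coalgebra k C]
    (D : DoiHopfDatum k H A C) (M : Type*) [AddCommGroup M] [Module k M] where
  /-- the right `A`-action on `M` -/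
  sm : M →ₗ[k] A →ₗ[k] M
  sm_one : ∀ m : M, sm m 1 = m
  sm_mul : ∀ (m : M) (a b : A), sm (sm m a) b = sm m (a * b)
  /-- the left `C`-coaction `ρ_M : M → C ⊗ M` -/
  cρ : M →ₗ[k] C ⊗[k] M
  cρ_coassoc : ∀ m : M,
    (TensorProduct.assoc k C C M)
        ((TensorProduct.map (Coalgebra.comul (R := k)) LinearMap.id) (cρ m))
      = (TensorProduct.map LinearMap.id cρ) (cρ m)
  cρ_counit : ∀ m : M,
    (TensorProduct.lid k M)
        ((TensorProduct.map (Coalgebra.counit (R := k)) LinearMap.id) (cρ m)) = m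
  compat : ∀ (m : M) (a : A),
    cρ (sm m a)
      = (TensorProduct.map D.actL (TensorProduct.lift sm))
          ((TensorProduct.tensorTensorTensorComm k C M H A)
            (cρ m ⊗ₜ[k] D.ρ a))

namespace DoiHopfDatum

variable {k H A C : Type*} [CommRing k] [Ring H] [Bialgebra k H]
    [Ring A] [Algebra k A] [AddCommGroup C] [Module k C] [Coalgebra k C]
variable (D : DoiHopfDatum k H A C)

/-- The natural transformation attached to `θ : C ⊗ C → A`:
`ν_M (c ⊗ m) = Σ m_{<0>} · θ(c ⊗ m_{<-1>})`. -/
def nuMap (θ : C ⊗[k] C →ₗ[k] A) {M : Type*} [AddCommGroup M] [Module k M]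
    (DM : DHModule D M) : C ⊗[k] M →ₗ[k] M :=
  (TensorProduct.lift DM.sm) ∘ₗ (TensorProduct.comm k A M).toLinearMap ∘ₗ
    (TensorProduct.map θ LinearMap.id) ∘ₗ
    (TensorProduct.assoc k C C M).symm.toLinearMap ∘ₗ
    (TensorProduct.map LinearMap.id DM.cρ)

/-- The right `A`-action on `C ⊗ M`: `(c ⊗ m) · a = Σ c·a_{<-1>} ⊗ m·a_{<0>}`. -/
def actCM {M : Type*} [AddCommGroup M] [Module k M] (DM : DHModule D M) :
    (C ⊗[k] M) ⊗[k] A →ₗ[k] C ⊗[k] M :=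
  (TensorProduct.map D.actL (TensorProduct.lift DM.sm)) ∘ₗ
    (TensorProduct.tensorTensorTensorComm k C M H A).toLinearMap ∘ₗ
    (TensorProduct.map LinearMap.id D.ρ)

end DoiHopfDatum

namespace DoiHopfDatum

variable {k H A C : Type*} [CommRing k] [Ring H] [Bialgebra k H]
    [Ring A] [Algebra k A] [AddCommGroup C] [Module k C] [Coalgebra k C]

/-- `z = Σ_i c_i ⊗ a_i ∈ C ⊗ A` is a dual `A`-integral:
`Σ_i c_i ⊗ a·a_i = Σ_i c_i·a_{<-1>} ⊗ a_i·a_{<0>}` for all `a ∈ A`. -/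
def IsDualAIntegral (D : DoiHopfDatum k H A C) (z : C ⊗[k] A) : Prop :=
  ∀ a : A, (TensorProduct.map LinearMap.id (LinearMap.mulLeft k a)) z
    = D.rActCA (z ⊗ₜ[k] a)

/-- A dual `A`-integral is normalized if `Σ_i ε(c_i) a_i = 1`. -/
def IsNormalizedDualAIntegral (D : DoiHopfDatum k H A C) (z : C ⊗[k] A) : Prop :=
  D.IsDualAIntegral z ∧
    (TensorProduct.lid k A)
      ((TensorProduct.map (Coalgebra.counit (R := k)) LinearMap.id) z) = 1

/-- For a right `A`-module `N`, the map `θ_N : N → C ⊗ N`, `n ↦ Σ_i c_i ⊗ n·a_i`. -/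
def thetaMap (_D : DoiHopfDatum k H A C) (z : C ⊗[k] A)
    {N : Type*} [AddCommGroup N] [Module k N] (sm : N →ₗ[k] A →ₗ[k] N) :
    N →ₗ[k] C ⊗[k] N :=
  (TensorProduct.map LinearMap.id
      ((TensorProduct.lift sm) ∘ₗ (TensorProduct.comm k A N).toLinearMap)) ∘ₗ
    (TensorProduct.assoc k C A N).toLinearMap ∘ₗ
    ((TensorProduct.mk k (C ⊗[k] A) N) z)

/-- The right `A`-action on `C ⊗ N`: `(c ⊗ n) · a = Σ c·a_{<-1>} ⊗ n·a_{<0>}`. -/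
def actCN (D : DoiHopfDatum k H A C)
    {N : Type*} [AddCommGroup N] [Module k N] (sm : N →ₗ[k] A →ₗ[k] N) :
    (C ⊗[k] N) ⊗[k] A →ₗ[k] C ⊗[k] N :=
  (TensorProduct.map D.actL (TensorProduct.lift sm)) ∘ₗ
    (TensorProduct.tensorTensorTensorComm k C N H A).toLinearMap ∘ₗ
    (TensorProduct.map LinearMap.id D.ρ)

end DoiHopfDatum

namespace DoiHopfDatum

variable {k H A C : Type*} [CommRing k] [Ring H] [Bialgebra k H]
    [Ring A] [Algebra k A] [AddCommGroup C] [Module k C] [Coalgebra k C]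
    (D : DoiHopfDatum k H A C) {N : Type*} [AddCommGroup N] [Module k N]
    (sm : N →ₗ[k] A →ₗ[k] N)

theorem thetaMap_apply (z : C ⊗[k] A) (n : N) :
    D.thetaMap z sm n = TensorProduct.map LinearMap.id (sm n) z := by
  induction z using TensorProduct.induction_on with
  | zero => simp [thetaMap]
  | tmul c a => simp [thetaMap]
  | add x y hx hy =>
    rw [map_add, ← hx, ← hy]
    simp [thetaMap]

/-- `id ⊗ sm n : C ⊗ A → C ⊗ N` commutes with the right `A`-actions. -/
theorem actCN_map (hsm_mul : ∀ (n : N) (a b : A), sm (sm n a) b = sm n (a * b))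
    (z : C ⊗[k] A) (n : N) (a : A) :
    D.actCN sm (TensorProduct.map LinearMap.id (sm n) z ⊗ₜ[k] a)
      = TensorProduct.map LinearMap.id (sm n) (D.rActCA (z ⊗ₜ[k] a)) := by
  simp only [actCN, rActCA, LinearMap.comp_apply, TensorProduct.map_tmul, LinearMap.id_apply,
    LinearEquiv.coe_coe]
  -- Both sides are linear in the coaction value, so a general element of `H ⊗ A` can replace it.
  generalize D.ρ a = r
  induction z using TensorProduct.induction_on with
  | zero => simp
  | add x y hx hy => simp only [map_add, TensorProduct.add_tmul, hx, hy]
  | tmul c b =>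
    induction r using TensorProduct.induction_on with
    | zero => simp
    | add x y hx hy => simp only [map_add, TensorProduct.tmul_add, hx, hy]
    | tmul h b' => simp [hsm_mul]

end DoiHopfDatum

/-- if `z = Σ_i c_i ⊗ a_i` is a dual `A`-integral then for every right
`A`-module `N`, the map `θ_N(n) = Σ_i c_i ⊗ n·a_i` is right `A`-linear, where `C ⊗ N`
carries the action `(c ⊗ n)·a = Σ c·a_{<-1>} ⊗ n·a_{<0>}`; if moreover `z` is
normalized, then `θ_N` is a section of the counit map `c ⊗ n ↦ ε(c)n`. -/
theorem dual_integral_theta_linear_and_section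
    {k H A C : Type*} [CommRing k] [Ring H] [Bialgebra k H]
    [Ring A] [Algebra k A] [AddCommGroup C] [Module k C] [Coalgebra k C]
    (D : DoiHopfDatum k H A C) (z : C ⊗[k] A) (hz : D.IsDualAIntegral z)
    {N : Type*} [AddCommGroup N] [Module k N] (sm : N →ₗ[k] A →ₗ[k] N)
    (hsm_one : ∀ n : N, sm n 1 = n)
    (hsm_mul : ∀ (n : N) (a b : A), sm (sm n a) b = sm n (a * b)) :
    (∀ (n : N) (a : A),
        D.thetaMap z sm (sm n a) = D.actCN sm ((D.thetaMap z sm n) ⊗ₜ[k] a)) ∧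
    ((TensorProduct.lid k A)
        ((TensorProduct.map (Coalgebra.counit (R := k)) LinearMap.id) z) = 1 →
      ∀ n : N,
        (TensorProduct.lid k N)
          ((TensorProduct.map (Coalgebra.counit (R := k)) LinearMap.id)
            (D.thetaMap z sm n)) = n) := by
  refine ⟨fun n a => ?_, fun h n => ?_⟩
  · have hcomp : sm (sm n a) = sm n ∘ₗ LinearMap.mulLeft k a := by
      ext b
      simp [hsm_mul]
    rw [D.thetaMap_apply, D.thetaMap_apply, D.actCN_map sm hsm_mul, ← hz a, hcomp,
      ← LinearMap.comp_apply, ← TensorProduct.map_comp, LinearMap.id_comp]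
  · have hnat : ∀ w : C ⊗[k] A,
        TensorProduct.lid k N (TensorProduct.map (Coalgebra.counit (R := k)) LinearMap.id
            (TensorProduct.map LinearMap.id (sm n) w))
          = sm n (TensorProduct.lid k A
              (TensorProduct.map (Coalgebra.counit (R := k)) LinearMap.id w)) := by
      intro w
      induction w using TensorProduct.induction_on with
      | zero => simp
      | tmul c a => simp
      | add x y hx hy => simp only [map_add, hx, hy]
    rw [D.thetaMap_apply, hnat, h, hsm_one]
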